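/- Let E be a finite quiver with vertex set {1,…,d}, let P = {p_1,…,p_d} be the set of vertices of the path algebra P_k(E), and let (M,μ) be a filtered left P_k(E)-module. Then there exist sets B^i_h ⊆ p_i M_h \ M_{h−1}, for i = 1,…,d and h ∈ ℕ (where M_h = {m ∈ M : μ(m) ≤ h}), such that B = ∪_{i,h} B^i_h is a weak P-μ-basis for M. Moreover, the cardinality of each B^i_h is independent of the choice of weak P-μ-basis. -/

import Mathlib

namespace LPA

variable {R : Type} [Ring R] {M : Type} [AddCommGroup M] [Module R M]

/-- A filtration on a ring `R`: a degree function `ν : R → ℕ ∪ {-∞}`. -/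
structure IsRingFiltration (ν : R → WithBot ℕ) : Prop where
  map_zero : ν 0 = ⊥
  nonneg : ∀ r : R, r ≠ 0 → 0 ≤ ν r
  sub_le : ∀ r s : R, ν (r - s) ≤ max (ν r) (ν s)
  mul_le : ∀ r s : R, ν (r * s) ≤ ν r + ν s
  map_one : ν 1 = 0

/-- A set of vertices in a filtered ring: a finite set of zero-degree, pairwise orthogonal
idempotents summing to `1`. -/
structure IsVertexSet (ν : R → WithBot ℕ) (P : Finset R) : Prop where
  idem : ∀ p ∈ P, p * p = p
  deg_eq_zero : ∀ p ∈ P, ν p = 0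
  orthogonal : ∀ p ∈ P, ∀ q ∈ P, p ≠ q → p * q = 0
  sum_eq_one : ∑ p ∈ P, p = 1

/-- A filtration on a module over a filtered ring. -/
structure IsModuleFiltration (ν : R → WithBot ℕ) (μ : M → WithBot ℕ) : Prop where
  map_zero : μ 0 = ⊥
  nonneg : ∀ m : M, m ≠ 0 → 0 ≤ μ m
  sub_le : ∀ m n : M, μ (m - n) ≤ max (μ m) (μ n)
  smul_le : ∀ (r : R) (m : M), μ (r • m) ≤ ν r + μ m

/-- The family `(m i)`, with `m i ∈ (n i)•M`, is left `P`-`μ`-dependent: some `m i = 0`, or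
there is a finitely supported family `(r i)` with `r i ∈ R·(n i)` such that the degree of
`∑ r i • m i` is strictly smaller than its formal degree `max (ν (r i) + μ (m i))`. -/
def DepFamily (ν : R → WithBot ℕ) (μ : M → WithBot ℕ) {I : Type} (n : I → R) (m : I → M) :
    Prop :=
  (∃ i, m i = 0) ∨ ∃ r : I →₀ R, (∀ i, r i * n i = r i) ∧
    μ (r.sum fun i ri => ri • m i) < r.support.sup fun i => ν (r i) + μ (m i)

/-- The element `x` is left `P`-`μ`-dependent on the family `(m i)`. -/
def DepOn (ν : R → WithBot ℕ) (μ : M → WithBot ℕ) {I : Type} (n : I → R) (m : I → M)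
    (x : M) : Prop :=
  x = 0 ∨ ∃ r : I →₀ R, (∀ i, r i * n i = r i) ∧
    μ (x - r.sum fun i ri => ri • m i) < μ x ∧ ∀ i, ν (r i) + μ (m i) ≤ μ x

/-- The element `x` is left `P`-`μ`-dependent on the set `S`. -/
def DepOnSet (ν : R → WithBot ℕ) (μ : M → WithBot ℕ) (P : Finset R) (S : Set M) (x : M) :
    Prop :=
  ∃ (I : Type) (n : I → R) (m : I → M), (∀ i, n i ∈ P) ∧ (∀ i, ∃ s ∈ S, m i = n i • s) ∧
    DepOn ν μ n m x

/-- `M` satisfies the weak algorithm relative to `μ` and `P`: in every finite left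
`P`-`μ`-dependent family with weakly increasing degrees, some member is left
`P`-`μ`-dependent on the preceding ones. -/
def WeakAlgorithm (ν : R → WithBot ℕ) (P : Finset R) (μ : M → WithBot ℕ) : Prop :=
  ∀ (ℓ : ℕ) (n : Fin ℓ → R) (m : Fin ℓ → M),
    (∀ i, n i ∈ P) → (∀ i, n i • m i = m i) →
    (∀ i j : Fin ℓ, i ≤ j → μ (m i) ≤ μ (m j)) →
    DepFamily ν μ n m →
    ∃ i : Fin ℓ, DepOn ν μ (fun j : {j : Fin ℓ // j < i} => n j.1)
      (fun j : {j : Fin ℓ // j < i} => m j.1) (m i)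

/-- A weak `P`-`μ`-basis for `M`. -/
def IsWeakBasis (ν : R → WithBot ℕ) (P : Finset R) (μ : M → WithBot ℕ) (B : Set M) : Prop :=
  (∀ b ∈ B, ∃ p ∈ P, ∃ m : M, b = p • m) ∧
  (∀ x : M, DepOnSet ν μ P B x) ∧
  (∀ b ∈ B, ¬ DepOnSet ν μ P (B \ {b}) b)

end LPA

namespace LPA

/-- A finite quiver: finite sets of vertices and arrows with source and target maps. -/
structure FinQuiver : Type 1 where
  V : Type
  A : Type
  [fintypeV : Fintype V]
  [decEqV : DecidableEq V]
  [fintypeA : Fintype A]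
  [decEqA : DecidableEq A]
  src : A → V
  tgt : A → V

attribute [instance] FinQuiver.fintypeV FinQuiver.decEqV FinQuiver.fintypeA FinQuiver.decEqA

/-- The inverse quiver: all arrows reversed. -/
def FinQuiver.rev (Q : FinQuiver) : FinQuiver where
  V := Q.V
  A := Q.A
  fintypeV := Q.fintypeV
  decEqV := Q.decEqV
  fintypeA := Q.fintypeA
  decEqA := Q.decEqA
  src := Q.tgt
  tgt := Q.src

/-- Generators of the path algebra: a trivial path `p v` for each vertex and an arrow `e` for
each arrow. -/
inductive PathGen (Q : FinQuiver) : Type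
  | vertex (v : Q.V) : PathGen Q
  | edge (e : Q.A) : PathGen Q

/-- Defining relations of the path algebra: the trivial paths are pairwise orthogonal
idempotents summing to `1`, and `p (src e) * e = e = e * p (tgt e)`. -/
inductive PathRel (k : Type) [CommRing k] (Q : FinQuiver) :
    FreeAlgebra k (PathGen Q) → FreeAlgebra k (PathGen Q) → Prop
  | vertex_mul_self (v : Q.V) :
      PathRel k Q (FreeAlgebra.ι k (PathGen.vertex v) * FreeAlgebra.ι k (PathGen.vertex v))
        (FreeAlgebra.ι k (PathGen.vertex v))
  | vertex_mul_ne (v w : Q.V) (h : v ≠ w) :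
      PathRel k Q (FreeAlgebra.ι k (PathGen.vertex v) * FreeAlgebra.ι k (PathGen.vertex w)) 0
  | sum_vertex :
      PathRel k Q (∑ v : Q.V, FreeAlgebra.ι k (PathGen.vertex v)) 1
  | src_mul (e : Q.A) :
      PathRel k Q
        (FreeAlgebra.ι k (PathGen.vertex (Q.src e)) * FreeAlgebra.ι k (PathGen.edge e))
        (FreeAlgebra.ι k (PathGen.edge e))
  | mul_tgt (e : Q.A) :
      PathRel k Q
        (FreeAlgebra.ι k (PathGen.edge e) * FreeAlgebra.ι k (PathGen.vertex (Q.tgt e)))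
        (FreeAlgebra.ι k (PathGen.edge e))

/-- The path algebra `P_k(Q)` of a finite quiver `Q`, presented by generators and relations. -/
def PathAlg (k : Type) [CommRing k] (Q : FinQuiver) : Type :=
  RingQuot (PathRel k Q)

variable (k : Type) [CommRing k] (Q : FinQuiver)

noncomputable instance : Ring (PathAlg k Q) :=
  inferInstanceAs (Ring (RingQuot (PathRel k Q)))

noncomputable instance : Algebra k (PathAlg k Q) :=
  inferInstanceAs (Algebra k (RingQuot (PathRel k Q)))

/-- The quotient map from the free algebra onto the path algebra. -/
noncomputable def PathAlg.mk : FreeAlgebra k (PathGen Q) →ₐ[k] PathAlg k Q :=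
  RingQuot.mkAlgHom k (PathRel k Q)

/-- The trivial path (vertex idempotent) `p v` in the path algebra. -/
noncomputable def PathAlg.p (v : Q.V) : PathAlg k Q :=
  PathAlg.mk k Q (FreeAlgebra.ι k (PathGen.vertex v))

/-- The arrow `e` in the path algebra. -/
noncomputable def PathAlg.arrow (e : Q.A) : PathAlg k Q :=
  PathAlg.mk k Q (FreeAlgebra.ι k (PathGen.edge e))

theorem PathAlg.mk_rel {x y : FreeAlgebra k (PathGen Q)} (h : PathRel k Q x y) :
    PathAlg.mk k Q x = PathAlg.mk k Q y :=
  RingQuot.mkAlgHom_rel k h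

theorem PathAlg.p_mul_self (v : Q.V) : PathAlg.p k Q v * PathAlg.p k Q v = PathAlg.p k Q v := by
  have h := PathAlg.mk_rel k Q (PathRel.vertex_mul_self v)
  simpa [map_mul, PathAlg.p] using h

theorem PathAlg.p_mul_ne (v w : Q.V) (hvw : v ≠ w) :
    PathAlg.p k Q v * PathAlg.p k Q w = 0 := by
  have h := PathAlg.mk_rel k Q (PathRel.vertex_mul_ne v w hvw)
  simpa [map_mul, PathAlg.p] using h

theorem PathAlg.sum_p : (∑ v : Q.V, PathAlg.p k Q v) = 1 := by
  have h := PathAlg.mk_rel k Q (PathRel.sum_vertex)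
  simpa [map_sum, PathAlg.p] using h

theorem PathAlg.arrow_mul_tgt (e : Q.A) :
    PathAlg.arrow k Q e * PathAlg.p k Q (Q.tgt e) = PathAlg.arrow k Q e := by
  have h := PathAlg.mk_rel k Q (PathRel.mul_tgt e)
  simpa [map_mul, PathAlg.p, PathAlg.arrow] using h

theorem PathAlg.src_mul_arrow (e : Q.A) :
    PathAlg.p k Q (Q.src e) * PathAlg.arrow k Q e = PathAlg.arrow k Q e := by
  have h := PathAlg.mk_rel k Q (PathRel.src_mul e)
  simpa [map_mul, PathAlg.p, PathAlg.arrow] using h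

/-- The set of vertices `{p v | v ∈ Q.V}` of the path algebra, as a finite set. -/
noncomputable def vertexFinset : Finset (PathAlg k Q) :=
  letI := Classical.decEq (PathAlg k Q)
  Finset.univ.image (PathAlg.p k Q)

end LPA

namespace LPA

variable (k : Type) [CommRing k] (Q : FinQuiver)

/-- The image in the path algebra of a word in the generators. -/
noncomputable def pathOfWord (w : FreeMonoid (PathGen Q)) : PathAlg k Q :=
  PathAlg.mk k Q (FreeMonoid.lift (FreeAlgebra.ι k) w)

/-- The number of edge-letters in a word in the generators. -/
def edgeCount (w : FreeMonoid (PathGen Q)) : ℕ :=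
  (FreeMonoid.toList w).countP fun g =>
    match g with
    | PathGen.edge _ => true
    | PathGen.vertex _ => false

/-- The `k`-span of the images of all words with at most `n` edge-letters: the elements of
degree at most `n` in the path algebra. -/
noncomputable def wordSpan (n : ℕ) : Submodule k (PathAlg k Q) :=
  Submodule.span k (pathOfWord k Q '' {w | edgeCount Q w ≤ n})

open Classical in
/-- The path-length degree function on the path algebra: `pdeg x` is the smallest `n` such
that `x` is a `k`-linear combination of paths of length at most `n` (i.e. the maximal length
of a path in the support of `x`), and `pdeg 0 = ⊥ = -∞`. -/
noncomputable def pdeg (x : PathAlg k Q) : WithBot ℕ :=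
  if x = 0 then ⊥ else ↑(sInf {n : ℕ | x ∈ wordSpan k Q n})

end LPA

/-!
An element of degree at most zero of the path algebra acts on `p M` as a scalar of `k`. Hence, for
a set `B` of nonzero elements of the `p M`, being a weak basis can be tested one vertex `p` and one
degree `h` at a time: it means that the elements of `B` lying in `p M` and of degree `h` form a
`k`-basis of the image of `p M_h` modulo the part of `M_h` that elements of degree less than `h`
generate in formal degree at most `h`. Existence is then the existence of bases of vector spaces,
and uniqueness is the invariance of dimension.
-/

namespace LPA

/-- A `k`-algebra with a degree function `ν` and a complete set `P` of orthogonal idempotents of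
degree at most zero, such that `r * p` is a scalar multiple of `p` whenever `r` has degree at most
zero. Path algebras are the main example. The degrees of the idempotents are only bounded above, so
that the zero ring, which is the path algebra of the empty quiver, is included. -/
structure IsVertexFiltration (k : Type) [CommRing k] {R : Type} [Ring R] [Algebra k R]
    (ν : R → WithBot ℕ) (P : Finset R) : Prop where
  nonneg : ∀ r : R, r ≠ 0 → 0 ≤ ν r
  mul_le : ∀ r s : R, ν (r * s) ≤ ν r + ν s
  smul_le : ∀ (c : k) (r : R), ν (c • r) ≤ ν r
  idempotents : CompleteOrthogonalIdempotents fun p : P => (p : R)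
  vertex_le : ∀ p ∈ P, ν p ≤ 0
  mul_mem_span : ∀ r : R, ν r ≤ 0 → ∀ p ∈ P, r * p ∈ Submodule.span k {p}

/-- A subset of `⋃ p ∈ P, p M`, the kind of set that weak `P`-`μ`-bases are. Membership in `p M`
is expressed by `p • s = s`. -/
def IsVertexHomogeneous {R M : Type} [Ring R] [AddCommGroup M] [Module R M] (P : Finset R)
    (S : Set M) : Prop :=
  ∀ s ∈ S, ∃ p ∈ P, p • s = s

/-- The elements of `S` lying in `p M_h \ M_{h-1}`; for a weak basis `S`, this is the set `B^i_h`
of the paper, with `p = p_i`. -/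
def vertexPart {R M : Type} [Ring R] [AddCommGroup M] [Module R M] (μ : M → WithBot ℕ)
    (S : Set M) (p : R) (h : ℕ) : Set M :=
  {s | s ∈ S ∧ p • s = s ∧ μ s = h}

/-- The elements of `M` that can be written as `R`-linear combinations of elements of `S` of formal
degree at most `h`. -/
def formalSpan (k : Type) [CommRing k] {R M : Type} [Ring R] [AddCommGroup M] [Module R M]
    [Module k M] (ν : R → WithBot ℕ) (μ : M → WithBot ℕ) (S : Set M) (h : WithBot ℕ) :
    Submodule k M :=
  Submodule.span k {x | ∃ r : R, ∃ s ∈ S, ν r + μ s ≤ h ∧ r • s = x}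

/-- The part of `M_h` that is generated, in formal degree at most `h`, by elements of degree less
than `h`. New generators are needed in degree `h` exactly to the extent that this is not all of
`M_h`. -/
def lowerSpan (k : Type) [CommRing k] {R M : Type} [Ring R] [AddCommGroup M] [Module R M]
    [Module k M] (ν : R → WithBot ℕ) (μ : M → WithBot ℕ) (h : ℕ) : Submodule k M :=
  formalSpan k ν μ {m | μ m < h} h

/-- The image of `p M_h` in `M ⧸ lowerSpan k ν μ h`. It is spanned by the classes of the elements of
degree exactly `h`, since those of smaller degree vanish in the quotient. -/
def leadingSpace (k : Type) [CommRing k] {R M : Type} [Ring R] [AddCommGroup M] [Module R M]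
    [Module k M] (ν : R → WithBot ℕ) (μ : M → WithBot ℕ) (p : R) (h : ℕ) :
    Submodule k (M ⧸ lowerSpan k ν μ h) :=
  Submodule.span k ((lowerSpan k ν μ h).mkQ '' vertexPart μ Set.univ p h)

theorem mkQ_mem_span_image_iff {k M : Type*} [Ring k] [AddCommGroup M] [Module k M]
    {N : Submodule k M} {T : Set M} {x : M} :
    N.mkQ x ∈ Submodule.span k (N.mkQ '' T) ↔ x ∈ N ⊔ Submodule.span k T := by
  rw [← Submodule.map_span, ← Submodule.comap_map_mkQ, Submodule.mem_comap]

section Module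

variable {R M : Type} [Ring R] [AddCommGroup M] [Module R M]
  {ν : R → WithBot ℕ} {μ : M → WithBot ℕ} {P : Finset R} {S T : Set M}

theorem IsModuleFiltration.exists_eq_natCast (hμ : IsModuleFiltration ν μ) {x : M} (hx : x ≠ 0) :
    ∃ h : ℕ, μ x = h := by
  have hbot : μ x ≠ ⊥ := ((WithBot.bot_lt_coe 0).trans_le (hμ.nonneg x hx)).ne'
  obtain ⟨h, hh⟩ := WithBot.ne_bot_iff_exists.1 hbot
  exact ⟨h, hh.symm⟩

theorem IsModuleFiltration.ne_zero (hμ : IsModuleFiltration ν μ) {x : M} {h : ℕ} (hx : μ x = h) :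
    x ≠ 0 := by
  rintro rfl
  exact WithBot.bot_ne_coe (hμ.map_zero.symm.trans hx)

theorem depOnSet_zero : DepOnSet ν μ P S 0 :=
  ⟨PEmpty, PEmpty.elim, PEmpty.elim, fun i => i.elim, fun i => i.elim, Or.inl rfl⟩

theorem IsVertexHomogeneous.mono (hT : IsVertexHomogeneous P T) (hST : S ⊆ T) :
    IsVertexHomogeneous P S :=
  fun s hs => hT s (hST hs)

theorem vertexPart_sdiff_singleton (p : R) (h : ℕ) (b : M) :
    vertexPart μ (S \ {b}) p h = vertexPart μ S p h \ {b} := by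
  ext x
  simp only [vertexPart, Set.mem_sdiff, Set.mem_ofPred_eq]
  tauto

end Module

section Vertices

variable {k : Type} [CommRing k] {R M : Type} [Ring R] [Algebra k R] [AddCommGroup M] [Module R M]
  {ν : R → WithBot ℕ} {μ : M → WithBot ℕ} {P : Finset R} {S : Set M}

namespace IsVertexFiltration

theorem mul_self (hν : IsVertexFiltration k ν P) {p : R} (hp : p ∈ P) : p * p = p :=
  hν.idempotents.idem ⟨p, hp⟩

theorem mul_eq_zero (hν : IsVertexFiltration k ν P) {p q : R} (hp : p ∈ P) (hq : q ∈ P)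
    (hpq : p ≠ q) : p * q = 0 :=
  hν.idempotents.ortho (i := ⟨p, hp⟩) (j := ⟨q, hq⟩) fun h => hpq (congrArg Subtype.val h)

theorem sum_smul_eq (hν : IsVertexFiltration k ν P) (x : M) : ∑ p ∈ P, p • x = x := by
  rw [← Finset.sum_smul, ← Finset.sum_coe_sort, hν.idempotents.complete, one_smul]

theorem smul_eq_zero (hν : IsVertexFiltration k ν P) {p q : R} (hp : p ∈ P) (hq : q ∈ P)
    (hpq : p ≠ q) {s : M} (hs : q • s = s) : p • s = 0 := by
  rw [← hs, ← mul_smul, hν.mul_eq_zero hp hq hpq, zero_smul]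

theorem degree_smul_le (hν : IsVertexFiltration k ν P) (hμ : IsModuleFiltration ν μ) {p : R}
    (hp : p ∈ P) (x : M) : μ (p • x) ≤ μ x :=
  calc μ (p • x) ≤ ν p + μ x := hμ.smul_le p x
    _ ≤ 0 + μ x := by gcongr; exact hν.vertex_le p hp
    _ = μ x := zero_add _

theorem homogeneous_iff (hν : IsVertexFiltration k ν P) :
    (∀ s ∈ S, ∃ p ∈ P, ∃ m : M, s = p • m) ↔ IsVertexHomogeneous P S := by
  refine forall₂_congr fun s _ => exists_congr fun p => and_congr_right fun hp => ⟨?_, ?_⟩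
  · rintro ⟨m, rfl⟩
    rw [← mul_smul, hν.mul_self hp]
  · exact fun hps => ⟨s, hps.symm⟩

theorem vertexPart_biUnion (hν : IsVertexFiltration k ν P) (hμ : IsModuleFiltration ν μ)
    {T : R → ℕ → Set M} (hT : ∀ p h, T p h ⊆ vertexPart μ Set.univ p h) {p : R} (hp : p ∈ P)
    (h : ℕ) : vertexPart μ (⋃ q ∈ P, ⋃ j, T q j) p h = T p h := by
  ext b
  constructor
  · rintro ⟨hb, hpb, hμb⟩
    simp only [Set.mem_iUnion, exists_prop] at hb
    obtain ⟨q, hq, j, hbT⟩ := hb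
    obtain ⟨-, hqb, hμj⟩ := hT q j hbT
    obtain rfl : p = q := by
      by_contra hpq
      exact hμ.ne_zero hμb (hpb.symm.trans (hν.smul_eq_zero hp hq hpq hqb))
    obtain rfl : h = j := Nat.cast_injective (R := WithBot ℕ) (hμb.symm.trans hμj)
    exact hbT
  · exact fun hb => ⟨Set.mem_biUnion hp (Set.mem_iUnion_of_mem h hb), (hT p h hb).2⟩

end IsVertexFiltration

end Vertices

section FormalSpan

variable {k : Type} [CommRing k] {R M : Type} [Ring R] [AddCommGroup M] [Module R M] [Module k M]
  {ν : R → WithBot ℕ} {μ : M → WithBot ℕ} {P : Finset R} {S T : Set M}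

theorem smul_mem_formalSpan {r : R} {s : M} {h : WithBot ℕ} (hs : s ∈ S) (hle : ν r + μ s ≤ h) :
    r • s ∈ formalSpan k ν μ S h :=
  Submodule.subset_span ⟨r, s, hs, hle, rfl⟩

theorem formalSpan_mono {g h : WithBot ℕ} (hST : S ⊆ T) (hgh : g ≤ h) :
    formalSpan k ν μ S g ≤ formalSpan k ν μ T h := by
  refine Submodule.span_mono ?_
  rintro x ⟨r, s, hs, hle, rfl⟩
  exact ⟨r, s, hST hs, hle.trans hgh, rfl⟩

variable [Algebra k R]

namespace IsVertexFiltration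

theorem mem_formalSpan (hν : IsVertexFiltration k ν P) {s : M} {h : WithBot ℕ} (hs : s ∈ S)
    (hle : μ s ≤ h) : s ∈ formalSpan k ν μ S h := by
  rw [← hν.sum_smul_eq s]
  refine Submodule.sum_mem _ fun p hp => smul_mem_formalSpan hs ?_
  calc ν p + μ s ≤ 0 + μ s := by gcongr; exact hν.vertex_le p hp
    _ ≤ h := by rwa [zero_add]

theorem mem_lowerSpan (hν : IsVertexFiltration k ν P) {x : M} {h : ℕ} (hx : μ x < h) :
    x ∈ lowerSpan k ν μ h :=
  hν.mem_formalSpan hx hx.le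

theorem formalSpan_le_of_lt (hν : IsVertexFiltration k ν P) {g h : WithBot ℕ} (hgh : g < h) :
    formalSpan k ν μ S g ≤ formalSpan k ν μ {s | s ∈ S ∧ μ s < h} g := by
  refine Submodule.span_le.2 ?_
  rintro _ ⟨r, s, hs, hle, rfl⟩
  by_cases hr : r = 0
  · simp [hr]
  · have hsg : μ s ≤ g := (le_add_of_nonneg_left (hν.nonneg r hr)).trans hle
    exact smul_mem_formalSpan ⟨hs, hsg.trans_lt hgh⟩ hle

theorem span_vertexPart_le (hν : IsVertexFiltration k ν P) (p : R) (h : ℕ) :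
    Submodule.span k (vertexPart μ S p h) ≤ formalSpan k ν μ S h :=
  Submodule.span_le.2 fun _ hs => hν.mem_formalSpan hs.1 hs.2.2.le

variable [IsScalarTower k R M]

theorem smul_mem_formalSpan_add (hν : IsVertexFiltration k ν P) (r : R) {x : M} {h : WithBot ℕ}
    (hx : x ∈ formalSpan k ν μ S h) : r • x ∈ formalSpan k ν μ S (ν r + h) := by
  suffices formalSpan k ν μ S h ≤
      (formalSpan k ν μ S (ν r + h)).comap (Algebra.lsmul k k M r) from this hx
  refine Submodule.span_le.2 ?_
  rintro _ ⟨t, s, hs, hle, rfl⟩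
  change r • t • s ∈ formalSpan k ν μ S (ν r + h)
  rw [← mul_smul]
  refine smul_mem_formalSpan hs ?_
  calc ν (r * t) + μ s ≤ ν r + ν t + μ s := by gcongr; exact hν.mul_le r t
    _ = ν r + (ν t + μ s) := add_assoc _ _ _
    _ ≤ ν r + h := by gcongr

theorem vertex_smul_mem_formalSpan (hν : IsVertexFiltration k ν P) {p : R} (hp : p ∈ P) {x : M}
    {h : WithBot ℕ} (hx : x ∈ formalSpan k ν μ S h) : p • x ∈ formalSpan k ν μ S h := by
  refine formalSpan_mono subset_rfl ?_ (hν.smul_mem_formalSpan_add p hx)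
  calc ν p + h ≤ 0 + h := by gcongr; exact hν.vertex_le p hp
    _ = h := zero_add h

theorem lowerSpan_le (hν : IsVertexFiltration k ν P) {h : ℕ}
    (hS : ∀ x, μ x < h → x ∈ formalSpan k ν μ S (μ x)) :
    lowerSpan k ν μ h ≤ formalSpan k ν μ {s | s ∈ S ∧ μ s < h} h := by
  refine Submodule.span_le.2 ?_
  rintro _ ⟨r, x, hx, hle, rfl⟩
  have hx' : x ∈ formalSpan k ν μ {s | s ∈ S ∧ μ s < h} (μ x) :=
    hν.formalSpan_le_of_lt hx (hS x hx)
  exact formalSpan_mono subset_rfl hle (hν.smul_mem_formalSpan_add r hx')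

theorem smul_mem_span_singleton (hν : IsVertexFiltration k ν P) {p r : R} (hp : p ∈ P)
    (hr : ν r ≤ 0) {s : M} (hs : p • s = s) : r • s ∈ Submodule.span k {s} := by
  obtain ⟨c, hc⟩ := Submodule.mem_span_singleton.1 (hν.mul_mem_span r hr p hp)
  refine Submodule.mem_span_singleton.2 ⟨c, ?_⟩
  rw [← hs, ← smul_assoc, hc, mul_smul]

theorem formalSpan_le_lowerSpan_sup (hν : IsVertexFiltration k ν P)
    (hS : IsVertexHomogeneous P S) (h : ℕ) :
    formalSpan k ν μ S h ≤ lowerSpan k ν μ h ⊔ Submodule.span k {s | s ∈ S ∧ μ s = h} := by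
  refine Submodule.span_le.2 ?_
  rintro _ ⟨r, s, hs, hle, rfl⟩
  by_cases hr : r = 0
  · simp [hr]
  have hsh : μ s ≤ h := (le_add_of_nonneg_left (hν.nonneg r hr)).trans hle
  rcases hsh.lt_or_eq with hlt | heq
  · exact Submodule.mem_sup_left (smul_mem_formalSpan hlt hle)
  · have hr0 : ν r ≤ 0 := by
      rw [heq] at hle
      exact WithBot.le_of_add_le_add_right (WithBot.natCast_ne_bot h) (by rwa [zero_add])
    obtain ⟨p, hp, hps⟩ := hS s hs
    refine Submodule.mem_sup_right (Submodule.span_mono ?_ (hν.smul_mem_span_singleton hp hr0 hps))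
    exact Set.singleton_subset_iff.2 ⟨hs, heq⟩

theorem vertex_smul_mem_lowerSpan_sup (hν : IsVertexFiltration k ν P)
    (hS : IsVertexHomogeneous P S) {p : R} (hp : p ∈ P) {h : ℕ} {x : M}
    (hx : x ∈ formalSpan k ν μ S h) :
    p • x ∈ lowerSpan k ν μ h ⊔ Submodule.span k (vertexPart μ S p h) := by
  suffices lowerSpan k ν μ h ⊔ Submodule.span k {s | s ∈ S ∧ μ s = h} ≤
      (lowerSpan k ν μ h ⊔ Submodule.span k (vertexPart μ S p h)).comap (Algebra.lsmul k k M p) from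
    this (hν.formalSpan_le_lowerSpan_sup hS h hx)
  refine sup_le (fun y hy => Submodule.mem_sup_left (hν.vertex_smul_mem_formalSpan hp hy))
    (Submodule.span_le.2 ?_)
  rintro s ⟨hs, hμs⟩
  change p • s ∈ lowerSpan k ν μ h ⊔ Submodule.span k (vertexPart μ S p h)
  obtain ⟨q, hq, hqs⟩ := hS s hs
  by_cases hpq : p = q
  · subst hpq
    rw [hqs]
    exact Submodule.mem_sup_right (Submodule.subset_span ⟨hs, hqs, hμs⟩)
  · rw [hν.smul_eq_zero hp hq hpq hqs]
    exact Submodule.zero_mem _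

end IsVertexFiltration

end FormalSpan

section Dependence

variable {k : Type} [CommRing k] {R M : Type} [Ring R] [Algebra k R] [AddCommGroup M] [Module R M]
  [Module k M] {ν : R → WithBot ℕ} {μ : M → WithBot ℕ} {P : Finset R} {B S : Set M}

namespace IsVertexFiltration

theorem exists_mem_formalSpan_of_depOnSet (hν : IsVertexFiltration k ν P)
    (hS : IsVertexHomogeneous P S) {x : M} (hx : x ≠ 0) (hdep : DepOnSet ν μ P S x) :
    ∃ y ∈ formalSpan k ν μ S (μ x), μ (x - y) < μ x := by
  obtain ⟨I, n, m, hn, hm, h0 | ⟨r, -, hlt, hle⟩⟩ := hdep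
  · exact absurd h0 hx
  refine ⟨_, Submodule.sum_mem _ fun i _ => ?_, hlt⟩
  obtain ⟨s, hs, hms⟩ := hm i
  obtain ⟨q, hq, hqs⟩ := hS s hs
  by_cases hnq : n i = q
  · have hmi : m i = s := by rw [hms, hnq, hqs]
    exact smul_mem_formalSpan (hmi ▸ hs) (hle i)
  · simp only [hms, hν.smul_eq_zero (hn i) hq hnq hqs, smul_zero, Submodule.zero_mem]

theorem mem_formalSpan_of_forall_depOnSet (hν : IsVertexFiltration k ν P)
    (hB : IsVertexHomogeneous P B) (hdep : ∀ x, DepOnSet ν μ P B x) (x : M) :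
    x ∈ formalSpan k ν μ B (μ x) := by
  induction hd : μ x using WellFoundedLT.induction generalizing x with
  | ind d ih =>
    subst hd
    by_cases hx : x = 0
    · rw [hx]
      exact Submodule.zero_mem _
    obtain ⟨y, hy, hlt⟩ := hν.exists_mem_formalSpan_of_depOnSet hB hx (hdep x)
    have hxy : x - y ∈ formalSpan k ν μ B (μ x) :=
      formalSpan_mono subset_rfl hlt.le (ih _ hlt (x - y) rfl)
    exact (Submodule.sub_mem_iff_left _ hy).1 hxy

variable [IsScalarTower k R M]

theorem depOnSet_of_mem_formalSpan (hν : IsVertexFiltration k ν P)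
    (hS : IsVertexHomogeneous P S) {x y : M} (hy : y ∈ formalSpan k ν μ S (μ x))
    (hlt : μ (x - y) < μ x) : DepOnSet ν μ P S x := by
  obtain ⟨c, rfl⟩ := (Finsupp.mem_span_iff_linearCombination k _ y).1 hy
  choose r s hs hle hrs using
    fun i : {z | ∃ r : R, ∃ s ∈ S, ν r + μ s ≤ μ x ∧ r • s = z} => i.2
  choose p hp hps using fun i => hS (s i) (hs i)
  let a := Finsupp.onFinset c.support (fun i => c i • (r i * p i)) fun i hi =>
    Finsupp.mem_support_iff.2 fun hci => hi (by rw [hci, zero_smul])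
  have ha : ∀ i, a i = c i • (r i * p i) := fun _ => rfl
  have hsum : (a.sum fun i ai => ai • s i) = Finsupp.linearCombination k (↑) c := by
    rw [Finsupp.onFinset_sum _ (by simp), Finsupp.linearCombination_apply, Finsupp.sum]
    refine Finset.sum_congr rfl fun i _ => ?_
    rw [smul_assoc, mul_smul, hps, hrs]
  refine ⟨_, p, s, hp, fun i => ⟨s i, hs i, (hps i).symm⟩, Or.inr ⟨a, fun i => ?_, ?_, fun i => ?_⟩⟩
  · rw [ha, smul_mul_assoc, mul_assoc, hν.mul_self (hp i)]
  · rwa [hsum]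
  · calc ν (a i) + μ (s i) ≤ ν (r i * p i) + μ (s i) := by gcongr; exact hν.smul_le _ _
      _ ≤ ν (r i) + ν (p i) + μ (s i) := by gcongr; exact hν.mul_le _ _
      _ ≤ ν (r i) + 0 + μ (s i) := by gcongr; exact hν.vertex_le _ (hp i)
      _ ≤ μ x := by rw [add_zero]; exact hle i

theorem mkQ_mem_span_of_depOnSet (hν : IsVertexFiltration k ν P) (hμ : IsModuleFiltration ν μ)
    (hS : IsVertexHomogeneous P S) {p : R} (hp : p ∈ P) {h : ℕ} {x : M} (hpx : p • x = x)
    (hμx : μ x = h) (hdep : DepOnSet ν μ P S x) :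
    (lowerSpan k ν μ h).mkQ x ∈
      Submodule.span k ((lowerSpan k ν μ h).mkQ '' vertexPart μ S p h) := by
  obtain ⟨y, hy, hlt⟩ := hν.exists_mem_formalSpan_of_depOnSet hS (hμ.ne_zero hμx) hdep
  rw [hμx] at hy hlt
  have hlow : p • (x - y) ∈ lowerSpan k ν μ h :=
    hν.mem_lowerSpan ((hν.degree_smul_le hμ hp _).trans_lt hlt)
  have hsum := add_mem (Submodule.mem_sup_left hlow) (hν.vertex_smul_mem_lowerSpan_sup hS hp hy)
  rwa [← smul_add, sub_add_cancel, hpx, ← mkQ_mem_span_image_iff] at hsum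

theorem depOnSet_of_mkQ_mem_span (hν : IsVertexFiltration k ν P) (hμ : IsModuleFiltration ν μ)
    (hS : IsVertexHomogeneous P S) {p : R} {h : ℕ}
    (hlow : lowerSpan k ν μ h ≤ formalSpan k ν μ S h) {x : M} (hμx : μ x = h)
    (hx : (lowerSpan k ν μ h).mkQ x ∈
      Submodule.span k ((lowerSpan k ν μ h).mkQ '' vertexPart μ S p h)) :
    DepOnSet ν μ P S x := by
  have hx' : x ∈ formalSpan k ν μ S h :=
    sup_le hlow (hν.span_vertexPart_le p h) (mkQ_mem_span_image_iff.1 hx)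
  refine hν.depOnSet_of_mem_formalSpan hS (hμx ▸ hx') ?_
  rw [sub_self, hμ.map_zero, hμx]
  exact WithBot.bot_lt_coe h

theorem leadingSpace_le_of_forall_depOnSet (hν : IsVertexFiltration k ν P)
    (hμ : IsModuleFiltration ν μ) (hB : IsVertexHomogeneous P B) (hdep : ∀ x, DepOnSet ν μ P B x)
    {p : R} (hp : p ∈ P) (h : ℕ) :
    leadingSpace k ν μ p h ≤
      Submodule.span k ((lowerSpan k ν μ h).mkQ '' vertexPart μ B p h) := by
  refine Submodule.span_le.2 ?_
  rintro _ ⟨x, ⟨-, hpx, hμx⟩, rfl⟩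
  exact hν.mkQ_mem_span_of_depOnSet hμ hB hp hpx hμx (hdep x)

theorem mem_formalSpan_of_leadingSpace_le (hν : IsVertexFiltration k ν P)
    (hμ : IsModuleFiltration ν μ)
    (hB : ∀ p ∈ P, ∀ h, leadingSpace k ν μ p h ≤
      Submodule.span k ((lowerSpan k ν μ h).mkQ '' vertexPart μ B p h)) (x : M) :
    x ∈ formalSpan k ν μ B (μ x) := by
  induction hd : μ x using WellFoundedLT.induction generalizing x with
  | ind d ih =>
    by_cases hx : x = 0
    · rw [hx]
      exact Submodule.zero_mem _
    obtain ⟨h, hμx⟩ := hμ.exists_eq_natCast hx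
    obtain rfl : d = h := hd.symm.trans hμx
    rw [← hν.sum_smul_eq x]
    refine Submodule.sum_mem _ fun p hp => ?_
    rcases ((hν.degree_smul_le hμ hp x).trans_eq hμx).lt_or_eq with hlt | heq
    · exact formalSpan_mono subset_rfl hlt.le (ih _ hlt (p • x) rfl)
    · have hlead : (lowerSpan k ν μ h).mkQ (p • x) ∈ leadingSpace k ν μ p h :=
        Submodule.subset_span
          ⟨p • x, ⟨Set.mem_univ _, by rw [← mul_smul, hν.mul_self hp], heq⟩, rfl⟩
      have hlow : lowerSpan k ν μ h ≤ formalSpan k ν μ B h :=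
        (hν.lowerSpan_le fun y hy => ih _ hy y rfl).trans
          (formalSpan_mono (fun _ hs => hs.1) le_rfl)
      exact sup_le hlow (hν.span_vertexPart_le p h) (mkQ_mem_span_image_iff.1 (hB p hp h hlead))

theorem forall_depOnSet_of_leadingSpace_le (hν : IsVertexFiltration k ν P)
    (hμ : IsModuleFiltration ν μ) (hhom : IsVertexHomogeneous P B)
    (hB : ∀ p ∈ P, ∀ h, leadingSpace k ν μ p h ≤
      Submodule.span k ((lowerSpan k ν μ h).mkQ '' vertexPart μ B p h)) (x : M) :
    DepOnSet ν μ P B x := by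
  by_cases hx : x = 0
  · rw [hx]
    exact depOnSet_zero
  refine hν.depOnSet_of_mem_formalSpan hhom (hν.mem_formalSpan_of_leadingSpace_le hμ hB x) ?_
  obtain ⟨h, hμx⟩ := hμ.exists_eq_natCast hx
  rw [sub_self, hμ.map_zero, hμx]
  exact WithBot.bot_lt_coe h

end IsVertexFiltration

end Dependence

section WeakBasis

variable {k : Type} [Field k] {R M : Type} [Ring R] [Algebra k R] [AddCommGroup M] [Module R M]
  [Module k M] [IsScalarTower k R M]
  {ν : R → WithBot ℕ} {μ : M → WithBot ℕ} {P : Finset R} {B : Set M}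

namespace IsVertexFiltration

theorem linearIndepOn_of_isWeakBasis (hν : IsVertexFiltration k ν P) (hμ : IsModuleFiltration ν μ)
    (hB : IsWeakBasis ν P μ B) (p : R) (h : ℕ) :
    LinearIndepOn k (lowerSpan k ν μ h).mkQ (vertexPart μ B p h) := by
  obtain ⟨hhom, hdep, hmin⟩ := hB
  rw [hν.homogeneous_iff] at hhom
  refine linearIndepOn_iff_notMem_span.2 fun b hb hspan => hmin b hb.1 ?_
  have hlow : lowerSpan k ν μ h ≤ formalSpan k ν μ (B \ {b}) h := by
    refine (hν.lowerSpan_le fun x _ => hν.mem_formalSpan_of_forall_depOnSet hhom hdep x).trans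
      (formalSpan_mono ?_ le_rfl)
    rintro s ⟨hs, hlt⟩
    exact ⟨hs, fun hsb => hlt.ne (hsb ▸ hb.2.2)⟩
  rw [← vertexPart_sdiff_singleton] at hspan
  exact hν.depOnSet_of_mkQ_mem_span hμ (hhom.mono Set.sdiff_subset) hlow hb.2.2 hspan

theorem not_depOnSet_of_linearIndepOn (hν : IsVertexFiltration k ν P)
    (hμ : IsModuleFiltration ν μ) (hhom : IsVertexHomogeneous P B) {p : R} (hp : p ∈ P) {h : ℕ}
    (hind : LinearIndepOn k (lowerSpan k ν μ h).mkQ (vertexPart μ B p h)) {b : M}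
    (hb : b ∈ vertexPart μ B p h) : ¬ DepOnSet ν μ P (B \ {b}) b := by
  intro hdep
  have hspan := hν.mkQ_mem_span_of_depOnSet hμ (hhom.mono Set.sdiff_subset) hp hb.2.1 hb.2.2 hdep
  rw [vertexPart_sdiff_singleton] at hspan
  exact linearIndepOn_iff_notMem_span.1 hind b hb hspan

theorem isWeakBasis_iff (hν : IsVertexFiltration k ν P) (hμ : IsModuleFiltration ν μ) :
    IsWeakBasis ν P μ B ↔ IsVertexHomogeneous P B ∧ 0 ∉ B ∧ ∀ p ∈ P, ∀ h : ℕ,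
      LinearIndepOn k (lowerSpan k ν μ h).mkQ (vertexPart μ B p h) ∧
      Submodule.span k ((lowerSpan k ν μ h).mkQ '' vertexPart μ B p h) =
        leadingSpace k ν μ p h := by
  constructor
  · intro hB
    have hhom : IsVertexHomogeneous P B := hν.homogeneous_iff.1 hB.1
    refine ⟨hhom, fun h0 => hB.2.2 0 h0 depOnSet_zero, fun p hp h =>
      ⟨hν.linearIndepOn_of_isWeakBasis hμ hB p h, le_antisymm ?_
        (hν.leadingSpace_le_of_forall_depOnSet hμ hhom hB.2.1 hp h)⟩⟩
    exact Submodule.span_mono (Set.image_mono fun b hb => ⟨Set.mem_univ b, hb.2⟩)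
  · rintro ⟨hhom, h0, hB⟩
    refine ⟨hν.homogeneous_iff.2 hhom,
      hν.forall_depOnSet_of_leadingSpace_le hμ hhom fun p hp h => (hB p hp h).2.ge,
      fun b hb => ?_⟩
    obtain ⟨p, hp, hpb⟩ := hhom b hb
    obtain ⟨h, hμb⟩ := hμ.exists_eq_natCast (ne_of_mem_of_not_mem hb h0)
    exact hν.not_depOnSet_of_linearIndepOn hμ hhom hp (hB p hp h).1 ⟨hb, hpb, hμb⟩

theorem mk_vertexPart_eq_rank (hν : IsVertexFiltration k ν P) (hμ : IsModuleFiltration ν μ)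
    (hB : IsWeakBasis ν P μ B) {p : R} (hp : p ∈ P) (h : ℕ) :
    Cardinal.mk (vertexPart μ B p h) = Module.rank k (leadingSpace k ν μ p h) := by
  obtain ⟨hind, hspan⟩ := ((hν.isWeakBasis_iff hμ).1 hB).2.2 p hp h
  rw [← hspan, rank_span_set hind.id_image, Cardinal.mk_image_eq_of_injOn _ _ hind.injOn]

theorem exists_isWeakBasis (hν : IsVertexFiltration k ν P) (hμ : IsModuleFiltration ν μ) :
    ∃ B : Set M, IsWeakBasis ν P μ B := by
  choose T hT _ hspan hind using fun (p : R) (h : ℕ) =>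
    exists_linearIndepOn_extension (linearIndepOn_empty k (lowerSpan k ν μ h).mkQ)
      (Set.empty_subset (vertexPart μ Set.univ p h))
  refine ⟨⋃ p ∈ P, ⋃ h, T p h, (hν.isWeakBasis_iff hμ).2 ⟨?_, ?_, fun p hp h => ?_⟩⟩
  · intro b hb
    simp only [Set.mem_iUnion, exists_prop] at hb
    obtain ⟨p, hp, h, hbT⟩ := hb
    exact ⟨p, hp, (hT p h hbT).2.1⟩
  · simp only [Set.mem_iUnion, exists_prop, not_exists, not_and]
    exact fun p _ h h0 => hμ.ne_zero (hT p h h0).2.2 rfl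
  · rw [hν.vertexPart_biUnion hμ hT hp h]
    exact ⟨hind p h, le_antisymm (Submodule.span_mono (Set.image_mono (hT p h)))
      (Submodule.span_le.2 (hspan p h))⟩

end IsVertexFiltration

end WeakBasis

section PathAlgebra

variable (k : Type) [CommRing k] (Q : FinQuiver)

theorem pathOfWord_mul (u w : FreeMonoid (PathGen Q)) :
    pathOfWord k Q (u * w) = pathOfWord k Q u * pathOfWord k Q w := by
  simp only [pathOfWord, map_mul]

theorem edgeCount_mul (u w : FreeMonoid (PathGen Q)) :
    edgeCount Q (u * w) = edgeCount Q u + edgeCount Q w := by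
  simp only [edgeCount, FreeMonoid.toList_mul, List.countP_append]

theorem pathOfWord_vertex (v : Q.V) :
    pathOfWord k Q (FreeMonoid.of (PathGen.vertex v)) = PathAlg.p k Q v := by
  simp only [pathOfWord, PathAlg.p, FreeMonoid.lift_eval_of]

theorem pathOfWord_mem_wordSpan (w : FreeMonoid (PathGen Q)) :
    pathOfWord k Q w ∈ wordSpan k Q (edgeCount Q w) :=
  Submodule.subset_span ⟨w, le_refl (edgeCount Q w), rfl⟩

theorem one_mem_wordSpan : (1 : PathAlg k Q) ∈ wordSpan k Q 0 := by
  simpa only [pathOfWord, map_one] using! pathOfWord_mem_wordSpan k Q 1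

theorem p_mem_wordSpan (v : Q.V) : PathAlg.p k Q v ∈ wordSpan k Q 0 :=
  pathOfWord_vertex k Q v ▸ pathOfWord_mem_wordSpan k Q (FreeMonoid.of (PathGen.vertex v))

theorem wordSpan_mono : Monotone (wordSpan k Q) := fun _ _ hmn =>
  Submodule.span_mono (Set.image_mono fun _ hw => le_trans hw hmn)

theorem mul_mem_wordSpan {m n : ℕ} {x y : PathAlg k Q} (hx : x ∈ wordSpan k Q m)
    (hy : y ∈ wordSpan k Q n) : x * y ∈ wordSpan k Q (m + n) := by
  have hxy := Submodule.mul_mem_mul hx hy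
  rw [wordSpan, wordSpan, Submodule.span_mul_span] at hxy
  refine Submodule.span_mono ?_ hxy
  rintro _ ⟨_, ⟨u, hu, rfl⟩, _, ⟨w, hw, rfl⟩, rfl⟩
  exact ⟨u * w, (edgeCount_mul Q u w).trans_le (add_le_add hu hw), pathOfWord_mul k Q u w⟩

theorem exists_mem_wordSpan (x : PathAlg k Q) : ∃ n, x ∈ wordSpan k Q n := by
  obtain ⟨a, rfl⟩ : ∃ a, PathAlg.mk k Q a = x := RingQuot.mkAlgHom_surjective k (PathRel k Q) x
  induction a using FreeAlgebra.induction with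
  | grade0 c =>
    rw [AlgHom.commutes, Algebra.algebraMap_eq_smul_one]
    exact ⟨0, Submodule.smul_mem _ _ (one_mem_wordSpan k Q)⟩
  | grade1 g =>
    refine ⟨edgeCount Q (FreeMonoid.of g), ?_⟩
    simpa only [pathOfWord, FreeMonoid.lift_eval_of] using
      pathOfWord_mem_wordSpan k Q (FreeMonoid.of g)
  | mul a b ha hb =>
    obtain ⟨m, hm⟩ := ha
    obtain ⟨n, hn⟩ := hb
    rw [map_mul]
    exact ⟨m + n, mul_mem_wordSpan k Q hm hn⟩
  | add a b ha hb =>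
    obtain ⟨m, hm⟩ := ha
    obtain ⟨n, hn⟩ := hb
    rw [map_add]
    exact ⟨max m n, add_mem (wordSpan_mono k Q (le_max_left m n) hm)
      (wordSpan_mono k Q (le_max_right m n) hn)⟩

theorem pdeg_le_natCast_iff {x : PathAlg k Q} {n : ℕ} : pdeg k Q x ≤ n ↔ x ∈ wordSpan k Q n := by
  by_cases hx : x = 0
  · simp [pdeg, hx]
  rw [pdeg, if_neg hx]
  refine WithBot.coe_le_coe.trans ?_
  exact ⟨fun hle => wordSpan_mono k Q hle (Nat.sInf_mem (exists_mem_wordSpan k Q x)),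
    fun hmem => Nat.sInf_le hmem⟩

theorem pdeg_le_zero_iff {x : PathAlg k Q} : pdeg k Q x ≤ 0 ↔ x ∈ wordSpan k Q 0 :=
  pdeg_le_natCast_iff k Q (n := 0)

theorem exists_pdeg_eq_natCast {x : PathAlg k Q} (hx : x ≠ 0) : ∃ n : ℕ, pdeg k Q x = n :=
  ⟨_, if_neg hx⟩

theorem pdeg_mul_le (x y : PathAlg k Q) : pdeg k Q (x * y) ≤ pdeg k Q x + pdeg k Q y := by
  by_cases hx : x = 0
  · simp [hx, pdeg]
  by_cases hy : y = 0
  · simp [hy, pdeg]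
  obtain ⟨m, hm⟩ := exists_pdeg_eq_natCast k Q hx
  obtain ⟨n, hn⟩ := exists_pdeg_eq_natCast k Q hy
  rw [hm, hn, ← Nat.cast_add, pdeg_le_natCast_iff]
  exact mul_mem_wordSpan k Q ((pdeg_le_natCast_iff k Q).1 hm.le) ((pdeg_le_natCast_iff k Q).1 hn.le)

theorem pdeg_smul_le (c : k) (x : PathAlg k Q) : pdeg k Q (c • x) ≤ pdeg k Q x := by
  by_cases hx : x = 0
  · rw [hx, smul_zero]
  obtain ⟨n, hn⟩ := exists_pdeg_eq_natCast k Q hx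
  rw [hn, pdeg_le_natCast_iff]
  exact Submodule.smul_mem _ c ((pdeg_le_natCast_iff k Q).1 hn.le)

theorem pathOfWord_mul_p_mem_span (v : Q.V) (w : FreeMonoid (PathGen Q)) (hw : edgeCount Q w = 0) :
    pathOfWord k Q w * PathAlg.p k Q v ∈ Submodule.span k {PathAlg.p k Q v} := by
  induction w using FreeMonoid.inductionOn' with
  | one =>
    simpa only [pathOfWord, map_one, one_mul] using Submodule.mem_span_singleton_self _
  | of_mul g w ih =>
    rw [edgeCount_mul, Nat.add_eq_zero_iff] at hw
    obtain ⟨c, hc⟩ := Submodule.mem_span_singleton.1 (ih hw.2)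
    rw [pathOfWord_mul, mul_assoc, ← hc, mul_smul_comm]
    refine Submodule.smul_mem _ c ?_
    cases g with
    | edge e => exact absurd hw.1 one_ne_zero
    | vertex u =>
      rw [pathOfWord_vertex]
      by_cases huv : u = v
      · rw [huv, PathAlg.p_mul_self]
        exact Submodule.mem_span_singleton_self _
      · rw [PathAlg.p_mul_ne k Q u v huv]
        exact Submodule.zero_mem _

theorem mul_p_mem_span {r : PathAlg k Q} (hr : r ∈ wordSpan k Q 0) (v : Q.V) :
    r * PathAlg.p k Q v ∈ Submodule.span k {PathAlg.p k Q v} := by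
  suffices wordSpan k Q 0 ≤ (Submodule.span k {PathAlg.p k Q v}).comap
      (LinearMap.mulRight k (PathAlg.p k Q v)) from this hr
  refine Submodule.span_le.2 ?_
  rintro _ ⟨w, hw, rfl⟩
  exact pathOfWord_mul_p_mem_span k Q v w (Nat.le_zero.1 hw)

theorem forall_mem_vertexFinset {C : PathAlg k Q → Prop} :
    (∀ p ∈ vertexFinset k Q, C p) ↔ ∀ v, C (PathAlg.p k Q v) := by
  simp [vertexFinset]

theorem sum_vertexFinset : ∑ p ∈ vertexFinset k Q, p = 1 := by
  classical
  rw [vertexFinset, Finset.sum_image_of_pairwise_eq_zero, PathAlg.sum_p]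
  intro v _ w _ hvw heq
  change PathAlg.p k Q v = 0
  rw [← PathAlg.p_mul_self, ← PathAlg.p_mul_ne k Q v w hvw, ← heq]

theorem completeOrthogonalIdempotents_vertexFinset :
    CompleteOrthogonalIdempotents fun p : vertexFinset k Q => (p : PathAlg k Q) := by
  refine CompleteOrthogonalIdempotents.iff_ortho_complete.2 ⟨?_, ?_⟩
  · have hortho : ∀ p ∈ vertexFinset k Q, ∀ q ∈ vertexFinset k Q, p ≠ q → p * q = 0 := by
      simp only [forall_mem_vertexFinset]
      exact fun v w hvw => PathAlg.p_mul_ne k Q v w (ne_of_apply_ne _ hvw)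
    exact fun p q hpq => hortho p p.2 q q.2 (Subtype.coe_ne_coe.2 hpq)
  · rw [Finset.sum_coe_sort (vertexFinset k Q) fun p => p, sum_vertexFinset]

theorem isVertexFiltration_pdeg : IsVertexFiltration k (pdeg k Q) (vertexFinset k Q) where
  nonneg x hx := by
    obtain ⟨n, hn⟩ := exists_pdeg_eq_natCast k Q hx
    rw [hn]
    exact Nat.cast_nonneg n
  mul_le := pdeg_mul_le k Q
  smul_le := pdeg_smul_le k Q
  idempotents := completeOrthogonalIdempotents_vertexFinset k Q
  vertex_le := (forall_mem_vertexFinset k Q).2 fun v =>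
    (pdeg_le_zero_iff k Q).2 (p_mem_wordSpan k Q v)
  mul_mem_span _ hr := (forall_mem_vertexFinset k Q).2 <|
    mul_p_mem_span k Q ((pdeg_le_zero_iff k Q).1 hr)

end PathAlgebra

end LPA

open LPA in
theorem statement_5_general {k R M : Type} [Field k] [Ring R] [Algebra k R] [AddCommGroup M]
    [Module R M] {ν : R → WithBot ℕ} {μ : M → WithBot ℕ} {P : Finset R}
    (hν : IsVertexFiltration k ν P) (hμ : IsModuleFiltration ν μ) :
    (∃ B : Set M, IsWeakBasis ν P μ B ∧
      ∀ b ∈ B, (∃ p ∈ P, p • b = b) ∧ ∃ h : ℕ, μ b = (h : WithBot ℕ)) ∧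
    ∀ B C : Set M, IsWeakBasis ν P μ B → IsWeakBasis ν P μ C → ∀ p ∈ P, ∀ h : ℕ,
      Cardinal.mk {b : M // b ∈ B ∧ p • b = b ∧ μ b = (h : WithBot ℕ)} =
        Cardinal.mk {c : M // c ∈ C ∧ p • c = c ∧ μ c = (h : WithBot ℕ)} := by
  let _ : Module k M := Module.compHom M (algebraMap k R)
  have : IsScalarTower k R M := .of_algebraMap_smul fun _ _ => rfl
  constructor
  · obtain ⟨B, hB⟩ := hν.exists_isWeakBasis hμ
    obtain ⟨hhom, h0, -⟩ := (hν.isWeakBasis_iff hμ).1 hB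
    exact ⟨B, hB, fun b hb =>
      ⟨hhom b hb, hμ.exists_eq_natCast (ne_of_mem_of_not_mem hb h0)⟩⟩
  · intro B C hB hC p hp h
    exact (hν.mk_vertexPart_eq_rank hμ hB hp h).trans (hν.mk_vertexPart_eq_rank hμ hC hp h).symm

open LPA in
/-- Every filtered module `(M, μ)` over the path algebra `P_k(E)` (with the
path-length degree `ν = pdeg` and set of vertices `P = {p_1, …, p_d}`) has a weak
`P`-`μ`-basis `B`, graded in the sense that every `b ∈ B` lies in `p_i M_h \ M_{h-1}` for a
(unique) vertex `p_i` and some `h ∈ ℕ` (i.e. `p_i • b = b` and `μ b = h`).  Moreover, for each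
vertex `p` and each `h`, the cardinality of `{b ∈ B | p • b = b, μ b = h}` is the same for all
weak `P`-`μ`-bases. -/
theorem statement_5 (k : Type) [Field k] (Q : FinQuiver) (M : Type) [AddCommGroup M]
    [Module (PathAlg k Q) M] (μ : M → WithBot ℕ)
    (hμ : IsModuleFiltration (pdeg k Q) μ) :
    (∃ B : Set M, IsWeakBasis (pdeg k Q) (vertexFinset k Q) μ B ∧
      ∀ b ∈ B, (∃ p ∈ vertexFinset k Q, p • b = b) ∧ ∃ h : ℕ, μ b = (h : WithBot ℕ)) ∧
    ∀ B C : Set M, IsWeakBasis (pdeg k Q) (vertexFinset k Q) μ B →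
      IsWeakBasis (pdeg k Q) (vertexFinset k Q) μ C →
      ∀ p ∈ vertexFinset k Q, ∀ h : ℕ,
        Cardinal.mk {b : M // b ∈ B ∧ p • b = b ∧ μ b = (h : WithBot ℕ)} =
          Cardinal.mk {c : M // c ∈ C ∧ p • c = c ∧ μ c = (h : WithBot ℕ)} :=
  statement_5_general (isVertexFiltration_pdeg k Q) hμ
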